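/- arXiv:math/0607322 — 3 statements merged into one kernel-verified Lean document; each statement's English description precedes it below -/
import Mathlib

section
/- Let g : [1,∞) → ℝ be continuous and positive with ∫₁^∞ dt/g(t) = 1, and let δ > 0. Then h_δ is twice differentiable on (1,∞) and satisfies the ordinary differential equation h_δ''(x) + (δ/((1+δ)·g(x)))·(1 + h_δ'(x))² = 0 for all x > 1. -/
open MeasureTheory Set

/-- `G_δ(x) = (1/(1+δ))·(1 + δ·∫₁^x dt/g(t))` (normalized so that `∫₁^∞ dt/g(t) = 1`). -/
noncomputable def Gdelta (g : ℝ → ℝ) (δ x : ℝ) : ℝ :=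
  (1 / (1 + δ)) * (1 + δ * ∫ t in (1:ℝ)..x, 1 / g t)

/-- `h_δ(x) = ∫₁^x (1 − G_δ(y))/G_δ(y) dy`. -/
noncomputable def hdelta (g : ℝ → ℝ) (δ x : ℝ) : ℝ :=
  ∫ y in (1:ℝ)..x, (1 - Gdelta g δ y) / Gdelta g δ y

/-!
Since `1 + h_δ' = 1 / G_δ` and `G_δ' = δ / ((1 + δ) g)`, differentiating once more gives
`h_δ'' = -G_δ' / G_δ² = -(δ / ((1 + δ) g)) (1 + h_δ')²`.
-/

open scoped Topology

section Primitive

variable {E : Type*} [NormedAddCommGroup E] {f : ℝ → E} {μ : Measure ℝ} {a x : ℝ}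

theorem integrableOn_Icc_of_locallyIntegrableOn_Ici (hf : LocallyIntegrableOn f (Ici a) μ)
    (b : ℝ) : IntegrableOn f (Icc a b) μ :=
  hf.integrableOn_compact_subset Icc_subset_Ici_self isCompact_Icc

variable [NormedSpace ℝ E]

theorem continuousOn_primitive_of_locallyIntegrableOn_Ici [NullSingletonClass μ]
    (hf : LocallyIntegrableOn f (Ici a) μ) :
    ContinuousOn (fun u => ∫ t in a..u, f t ∂μ) (Ici a) := by
  intro u hu
  have hau : a ≤ u + 1 := hu.trans (le_add_of_nonneg_right zero_le_one)
  have hcont : ContinuousOn (fun u => ∫ t in a..u, f t ∂μ) (Icc a (u + 1)) := by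
    rw [← uIcc_of_le hau]
    refine intervalIntegral.continuousOn_primitive_interval ?_
    rw [uIcc_of_le hau]
    exact integrableOn_Icc_of_locallyIntegrableOn_Ici hf (u + 1)
  exact (hcont u ⟨hu, (lt_add_one u).le⟩).mono_of_mem_nhdsWithin
    (inter_mem_nhdsWithin (Ici a) (Iic_mem_nhds (lt_add_one u)))

theorem hasDerivAt_primitive_of_locallyIntegrableOn_Ici [CompleteSpace E]
    (hf : LocallyIntegrableOn f (Ici a)) (hax : a < x) (hfx : ContinuousAt f x) :
    HasDerivAt (fun u => ∫ t in a..u, f t) (f x) x := by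
  have hint : IntervalIntegrable f volume a x :=
    (intervalIntegrable_iff_integrableOn_Icc_of_le hax.le).2
      (integrableOn_Icc_of_locallyIntegrableOn_Ici hf x)
  have hmeas : StronglyMeasurableAtFilter f (𝓝 x) :=
    ⟨Icc a (x + 1), Icc_mem_nhds hax (lt_add_one x),
      (integrableOn_Icc_of_locallyIntegrableOn_Ici hf (x + 1)).aestronglyMeasurable⟩
  exact intervalIntegral.integral_hasDerivAt_right hint hmeas hfx

end Primitive

section ODE

variable {g : ℝ → ℝ} {δ x : ℝ}

theorem Gdelta_pos (hδ : 0 ≤ δ) (hg : ∀ t ∈ Ici (1 : ℝ), 0 ≤ g t) (hx : 1 ≤ x) :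
    0 < Gdelta g δ x := by
  have hint : 0 ≤ ∫ t in (1 : ℝ)..x, 1 / g t :=
    intervalIntegral.integral_nonneg hx fun t ht => one_div_nonneg.2 (hg t ht.1)
  unfold Gdelta
  positivity

theorem continuousOn_Gdelta (hg : LocallyIntegrableOn (fun t => 1 / g t) (Ici 1)) :
    ContinuousOn (Gdelta g δ) (Ici 1) :=
  continuousOn_const.mul <| continuousOn_const.add <|
    continuousOn_const.mul (continuousOn_primitive_of_locallyIntegrableOn_Ici hg)

theorem hasDerivAt_Gdelta (hg : LocallyIntegrableOn (fun t => 1 / g t) (Ici 1)) (hx : 1 < x)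
    (hgx : ContinuousAt g x) (hgx₀ : g x ≠ 0) :
    HasDerivAt (Gdelta g δ) (δ / ((1 + δ) * g x)) x := by
  have hprim : HasDerivAt (fun u => ∫ t in (1 : ℝ)..u, 1 / g t) (1 / g x) x :=
    hasDerivAt_primitive_of_locallyIntegrableOn_Ici hg hx (continuousAt_const.div hgx hgx₀)
  exact (((hprim.const_mul δ).const_add 1).const_mul (1 / (1 + δ))).congr_deriv
    (by rw [mul_one_div, div_mul_div_comm, one_mul])

theorem hasDerivAt_hdelta (hg : LocallyIntegrableOn (fun t => 1 / g t) (Ici 1))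
    (hG : ∀ y ∈ Ici (1 : ℝ), Gdelta g δ y ≠ 0) (hx : 1 < x) :
    HasDerivAt (hdelta g δ) ((Gdelta g δ x)⁻¹ - 1) x := by
  have hcont : ContinuousOn (fun y => (1 - Gdelta g δ y) / Gdelta g δ y) (Ici 1) :=
    (continuousOn_const.sub (continuousOn_Gdelta hg)).div (continuousOn_Gdelta hg) hG
  have hderiv : HasDerivAt (hdelta g δ) ((1 - Gdelta g δ x) / Gdelta g δ x) x :=
    hasDerivAt_primitive_of_locallyIntegrableOn_Ici
      (hcont.locallyIntegrableOn measurableSet_Ici) hx (hcont.continuousAt (Ici_mem_nhds hx))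
  rwa [sub_div, one_div, div_self (hG x hx.le)] at hderiv

theorem hasDerivAt_deriv_hdelta (hg : LocallyIntegrableOn (fun t => 1 / g t) (Ici 1))
    (hG : ∀ y ∈ Ici (1 : ℝ), Gdelta g δ y ≠ 0) (hx : 1 < x) (hgx : ContinuousAt g x)
    (hgx₀ : g x ≠ 0) :
    HasDerivAt (deriv (hdelta g δ)) (-(δ / ((1 + δ) * g x)) / Gdelta g δ x ^ 2) x := by
  have hderiv : deriv (hdelta g δ) =ᶠ[𝓝 x] fun y => (Gdelta g δ y)⁻¹ - 1 := by
    filter_upwards [Ioi_mem_nhds hx] with y hy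
    exact (hasDerivAt_hdelta hg hG hy).deriv
  have hinv := (hasDerivAt_Gdelta hg hx hgx hgx₀).fun_inv (hG x hx.le)
  exact (hinv.sub_const 1).congr_of_eventuallyEq hderiv

theorem stmt_2_general (hg : LocallyIntegrableOn (fun t => 1 / g t) (Ici 1))
    (hG : ∀ y ∈ Ici (1 : ℝ), Gdelta g δ y ≠ 0) (hx : 1 < x) (hgx : ContinuousAt g x)
    (hgx₀ : g x ≠ 0) :
    DifferentiableAt ℝ (hdelta g δ) x ∧
    DifferentiableAt ℝ (deriv (hdelta g δ)) x ∧
    deriv (deriv (hdelta g δ)) x + (δ / ((1 + δ) * g x)) * (1 + deriv (hdelta g δ) x) ^ 2 = 0 := by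
  have hh' := hasDerivAt_hdelta hg hG hx
  have hh'' := hasDerivAt_deriv_hdelta hg hG hx hgx hgx₀
  refine ⟨hh'.differentiableAt, hh''.differentiableAt, ?_⟩
  rw [hh''.deriv, hh'.deriv]
  ring

end ODE

theorem stmt_2 (g : ℝ → ℝ) (δ : ℝ) (hδ : 0 < δ)
    (hgc : ContinuousOn g (Set.Ici 1))
    (hgpos : ∀ x ∈ Set.Ici (1:ℝ), 0 < g x)
    (hgint : IntegrableOn (fun t => 1 / g t) (Set.Ioi 1))
    (hgnorm : (∫ t in Set.Ioi (1:ℝ), 1 / g t) = 1) :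
    ∀ x ∈ Set.Ioi (1:ℝ),
      DifferentiableAt ℝ (hdelta g δ) x ∧
      DifferentiableAt ℝ (deriv (hdelta g δ)) x ∧
      deriv (deriv (hdelta g δ)) x + (δ / ((1 + δ) * g x)) * (1 + deriv (hdelta g δ) x) ^ 2 = 0 := by
  intro x hx
  exact stmt_2_general (Iff.mpr integrableOn_Ici_iff_integrableOn_Ioi hgint).locallyIntegrableOn
    (fun _ hy => (Gdelta_pos hδ.le (fun t ht => (hgpos t ht).le) hy).ne') hx
    (hgc.continuousAt (Ici_mem_nhds hx)) (hgpos x hx.out.le).ne'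
end

section
/- Let δ > 0 and let g(x) = x² for x ≥ 1. Then sup_{x ≥ 1} (x + h_δ(x))/x² ≤ (1+δ)²/(4δ). -/
open MeasureTheory Set

/-!
For `g(t) = t²` both integrals are elementary and give `h_δ(x) = δ/(1+δ) · log((1+δ)x - δ)`.
Splitting `log u = log a + log (u/a)` and applying `log v ≤ v - 1` to each term gives
`log u ≤ a + u/a - 2`. At `a = 2δ/(1+δ)` this bounds `x + h_δ(x)` by an affine function of `x`,
whose distance below `(1+δ)²x²/(4δ)` is a sum of two squares.
-/

lemma integral_one_div_sq {a b : ℝ} (h : (0 : ℝ) ∉ uIcc a b) :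
    ∫ t in a..b, 1 / t ^ 2 = 1 / a - 1 / b := by
  calc ∫ t in a..b, 1 / t ^ 2
      = ∫ t in a..b, t ^ (-2 : ℤ) := by simp only [one_div, zpow_neg, zpow_ofNat]
    _ = (b ^ (-2 + 1 : ℤ) - a ^ (-2 + 1 : ℤ)) / ((-2 : ℤ) + 1) :=
        integral_zpow (Or.inr ⟨by decide, h⟩)
    _ = 1 / a - 1 / b := by norm_num; ring

lemma log_le_add_div_sub_two {a u : ℝ} (ha : 0 < a) (hu : 0 < u) :
    Real.log u ≤ a + u / a - 2 := by
  have h_split : Real.log u = Real.log a + Real.log (u / a) := by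
    rw [Real.log_div hu.ne' ha.ne']; ring
  linarith [Real.log_le_sub_one_of_pos ha, Real.log_le_sub_one_of_pos (div_pos hu ha)]

lemma Gdelta_sq {δ y : ℝ} (hδ : 1 + δ ≠ 0) (hy : 0 < y) :
    Gdelta (fun t ↦ t ^ 2) δ y = ((1 + δ) * y - δ) / ((1 + δ) * y) := by
  rw [Gdelta, integral_one_div_sq (notMem_uIcc_of_lt one_pos hy)]
  field_simp
  ring

lemma one_sub_Gdelta_sq_div {δ y : ℝ} (hδ : 1 + δ ≠ 0) (hy : 0 < y) :
    (1 - Gdelta (fun t ↦ t ^ 2) δ y) / Gdelta (fun t ↦ t ^ 2) δ y =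
      δ * (1 / ((1 + δ) * y - δ)) := by
  have hden : (1 + δ) * y ≠ 0 := mul_ne_zero hδ hy.ne'
  rw [Gdelta_sq hδ hy, one_sub_div hden, div_div_div_cancel_right₀ hden, sub_sub_cancel,
    mul_one_div]

lemma hdelta_sq {δ x : ℝ} (hδ : 1 + δ ≠ 0) (hx : 0 < x) (hδx : 0 < (1 + δ) * x - δ) :
    hdelta (fun t ↦ t ^ 2) δ x = δ / (1 + δ) * Real.log ((1 + δ) * x - δ) := by
  calc hdelta (fun t ↦ t ^ 2) δ x
      = ∫ y in (1 : ℝ)..x, δ * (1 / ((1 + δ) * y - δ)) :=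
        intervalIntegral.integral_congr fun y hy ↦
          one_sub_Gdelta_sq_div hδ ((lt_min one_pos hx).trans_le hy.1)
    _ = δ * ((1 + δ)⁻¹ * ∫ u in (1 : ℝ)..((1 + δ) * x - δ), 1 / u) := by
        rw [intervalIntegral.integral_const_mul,
          intervalIntegral.integral_comp_mul_sub (fun u ↦ 1 / u) hδ, smul_eq_mul, mul_one,
          add_sub_cancel_right]
    _ = δ / (1 + δ) * Real.log ((1 + δ) * x - δ) := by
        rw [integral_one_div_of_pos one_pos hδx, div_one]; ring

lemma add_mul_log_le_mul_sq {δ x : ℝ} (hδ : 0 < δ) (hδx : 0 < (1 + δ) * x - δ) :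
    x + δ / (1 + δ) * Real.log ((1 + δ) * x - δ) ≤ (1 + δ) ^ 2 / (4 * δ) * x ^ 2 := by
  have h_log := log_le_add_div_sub_two (a := 2 * δ / (1 + δ)) (by positivity) hδx
  calc x + δ / (1 + δ) * Real.log ((1 + δ) * x - δ)
      ≤ x + δ / (1 + δ) *
          (2 * δ / (1 + δ) + ((1 + δ) * x - δ) / (2 * δ / (1 + δ)) - 2) := by gcongr
    _ = (1 + δ) ^ 2 / (4 * δ) * x ^ 2 - (((1 + δ) * x - δ * (1 + 2 / (1 + δ))) ^ 2
          + (δ * (1 - 2 / (1 + δ))) ^ 2) / (4 * δ) := by field_simp; ring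
    _ ≤ (1 + δ) ^ 2 / (4 * δ) * x ^ 2 := sub_le_self _ (by positivity)

theorem stmt_12 (δ : ℝ) (hδ : 0 < δ) (g : ℝ → ℝ) (hg : ∀ x, g x = x ^ 2) :
    (⨆ x : Set.Ici (1:ℝ), ((x : ℝ) + hdelta g δ x) / (x : ℝ) ^ 2) ≤ (1 + δ) ^ 2 / (4 * δ) := by
  obtain rfl : g = fun t ↦ t ^ 2 := funext hg
  refine ciSup_le fun ⟨x, (one_le_x : 1 ≤ x)⟩ ↦ ?_
  have hx : 0 < x := one_pos.trans_le one_le_x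
  have hδx : 0 < (1 + δ) * x - δ := by nlinarith
  rw [div_le_iff₀ (by positivity), hdelta_sq (by positivity) hx hδx]
  exact add_mul_log_le_mul_sq hδ hδx
end

section
/- Let s ∈ (0,1], δ > 0, and let g(x) = s⁻¹·x^{1+s} for x ≥ 1. Then for every x ≥ 1, ∫₁^x dt/g(t) = 1 − x^{−s} (so ∫₁^∞ dt/g(t) = 1), and sup_{x ≥ 1} (x + h_δ(x))/g(x) ≤ s·(1+δ). -/
open MeasureTheory Set

/-!
Since `∫₁^y dt/g` lies in `[0, 1]`, the function `G_δ` takes values in `[1/(1+δ), 1]`. Hence the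
integrand `(1 - G_δ)/G_δ` of `h_δ` lies in `[0, δ]`, so that `x + h_δ(x) ≤ (1 + δ) x`. For the power
weight, `x / g(x) = s x^{-s} ≤ s`.
-/

section GeneralWeight

variable {g : ℝ → ℝ} {δ x : ℝ}

theorem Gdelta_mem_Icc (hδ : 0 ≤ δ) (hI : (∫ t in (1 : ℝ)..x, 1 / g t) ∈ Icc 0 1) :
    Gdelta g δ x ∈ Icc (1 / (1 + δ)) 1 := by
  have hδ' : 0 < 1 + δ := by linarith
  rw [Gdelta, one_div_mul_eq_div]
  constructor
  · gcongr
    linarith [mul_nonneg hδ hI.1]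
  · rw [div_le_one hδ']
    linarith [mul_le_of_le_one_right hδ hI.2]

theorem one_sub_Gdelta_div_Gdelta_mem_Icc (hδ : 0 ≤ δ)
    (hI : (∫ t in (1 : ℝ)..x, 1 / g t) ∈ Icc 0 1) :
    (1 - Gdelta g δ x) / Gdelta g δ x ∈ Icc 0 δ := by
  have hδ' : 0 < 1 + δ := by linarith
  obtain ⟨hlower, hupper⟩ := Gdelta_mem_Icc hδ hI
  have hpos : 0 < Gdelta g δ x := (one_div_pos.2 hδ').trans_le hlower
  refine ⟨div_nonneg (sub_nonneg.2 hupper) hpos.le, ?_⟩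
  rw [div_le_iff₀ hpos]
  linarith [(div_le_iff₀ hδ').1 hlower]

theorem hdelta_le_mul_sub_one (hδ : 0 ≤ δ) (hx : 1 ≤ x)
    (hI : ∀ y ∈ Ioc 1 x, (∫ t in (1 : ℝ)..y, 1 / g t) ∈ Icc 0 1) :
    hdelta g δ x ≤ δ * (x - 1) := by
  have hbound : ∀ y ∈ uIoc 1 x, ‖(1 - Gdelta g δ y) / Gdelta g δ y‖ ≤ δ := by
    intro y hy
    rw [uIoc_of_le hx] at hy
    obtain ⟨hnonneg, hle⟩ := one_sub_Gdelta_div_Gdelta_mem_Icc hδ (hI y hy)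
    rwa [Real.norm_of_nonneg hnonneg]
  calc
    hdelta g δ x ≤ ‖hdelta g δ x‖ := Real.le_norm_self _
    _ ≤ δ * |x - 1| := intervalIntegral.norm_integral_le_of_norm_le_const hbound
    _ = δ * (x - 1) := by rw [abs_of_nonneg (sub_nonneg.2 hx)]

theorem add_hdelta_le_mul (hδ : 0 ≤ δ) (hx : 1 ≤ x)
    (hI : ∀ y ∈ Ioc 1 x, (∫ t in (1 : ℝ)..y, 1 / g t) ∈ Icc 0 1) :
    x + hdelta g δ x ≤ (1 + δ) * x := by
  linarith [hdelta_le_mul_sub_one hδ hx hI]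

end GeneralWeight

section PowerWeight

variable {s : ℝ}

theorem one_div_inv_mul_rpow_one_add {x : ℝ} (hx : 0 ≤ x) :
    1 / (s⁻¹ * x ^ (1 + s)) = s * x ^ (-(1 + s)) := by
  rw [Real.rpow_neg hx, one_div, mul_inv, inv_inv]

theorem integral_mul_rpow_neg_one_add {a b : ℝ} (ha : 0 < a) (hb : 0 < b) :
    ∫ t in a..b, s * t ^ (-(1 + s)) = a ^ (-s) - b ^ (-s) := by
  rcases eq_or_ne s 0 with rfl | hs
  · simp
  have hexp : -(1 + s) ≠ -1 := fun h ↦ hs (by linarith)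
  rw [intervalIntegral.integral_const_mul, integral_rpow (.inr ⟨hexp, notMem_uIcc_of_lt ha hb⟩),
    show -(1 + s) + 1 = -s by ring]
  field_simp
  ring

theorem integral_Ioi_mul_rpow_neg_one_add {a : ℝ} (hs : 0 < s) (ha : 0 < a) :
    ∫ t in Ioi a, s * t ^ (-(1 + s)) = a ^ (-s) := by
  rw [integral_const_mul, integral_Ioi_rpow_of_lt (by linarith) ha,
    show -(1 + s) + 1 = -s by ring]
  field_simp

theorem one_sub_rpow_neg_mem_Icc {x : ℝ} (hs : 0 ≤ s) (hx : 1 ≤ x) :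
    1 - x ^ (-s) ∈ Icc 0 1 :=
  ⟨sub_nonneg.2 (Real.rpow_le_one_of_one_le_of_nonpos hx (neg_nonpos.2 hs)),
    sub_le_self _ (Real.rpow_nonneg (zero_le_one.trans hx) _)⟩

theorem le_mul_inv_mul_rpow_one_add {x : ℝ} (hs : 0 < s) (hx : 1 ≤ x) :
    x ≤ s * (s⁻¹ * x ^ (1 + s)) := by
  rw [mul_inv_cancel_left₀ hs.ne']
  exact Real.self_le_rpow_of_one_le hx (by linarith)

end PowerWeight

theorem stmt_15_general {s δ : ℝ} (hs : 0 < s) (hδ : 0 ≤ δ) {g : ℝ → ℝ}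
    (hg : ∀ x ≥ 1, g x = s⁻¹ * x ^ (1 + s)) :
    (∀ x ≥ (1 : ℝ), (∫ t in (1 : ℝ)..x, 1 / g t) = 1 - x ^ (-s)) ∧
    (∫ t in Ioi (1 : ℝ), 1 / g t) = 1 ∧
    ∀ x ≥ (1 : ℝ), (x + hdelta g δ x) / g x ≤ s * (1 + δ) := by
  have one_div_g : EqOn (fun t ↦ 1 / g t) (fun t ↦ s * t ^ (-(1 + s))) (Ici 1) := fun t ht ↦ by
    simp only [hg t ht, one_div_inv_mul_rpow_one_add (zero_le_one.trans ht)]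
  have integral_one_div_g (x : ℝ) (hx : 1 ≤ x) : ∫ t in (1 : ℝ)..x, 1 / g t = 1 - x ^ (-s) := by
    rw [intervalIntegral.integral_congr (one_div_g.mono (uIcc_of_le hx ▸ Icc_subset_Ici_self)),
      integral_mul_rpow_neg_one_add one_pos (by linarith), Real.one_rpow]
  refine ⟨integral_one_div_g, ?_, fun x hx ↦ ?_⟩
  · rw [setIntegral_congr_fun measurableSet_Ioi (one_div_g.mono Ioi_subset_Ici_self),
      integral_Ioi_mul_rpow_neg_one_add hs one_pos, Real.one_rpow]
  · have hgx : 0 < g x := by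
      rw [hg x hx]
      positivity
    rw [div_le_iff₀ hgx]
    calc
      x + hdelta g δ x ≤ (1 + δ) * x := add_hdelta_le_mul hδ hx fun y hy ↦ by
        rw [integral_one_div_g y hy.1.le]
        exact one_sub_rpow_neg_mem_Icc hs.le hy.1.le
      _ ≤ (1 + δ) * (s * g x) := by
        rw [hg x hx]
        gcongr
        exact le_mul_inv_mul_rpow_one_add hs hx
      _ = s * (1 + δ) * g x := by ring

theorem stmt_15 (s : ℝ) (hs0 : 0 < s) (hs1 : s ≤ 1) (δ : ℝ) (hδ : 0 < δ)
    (g : ℝ → ℝ) (hg : ∀ x, g x = s⁻¹ * x ^ (1 + s)) :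
    (∀ x ≥ (1:ℝ), (∫ t in (1:ℝ)..x, 1 / g t) = 1 - x ^ (-s)) ∧
    (∫ t in Set.Ioi (1:ℝ), 1 / g t) = 1 ∧
    (⨆ x : Set.Ici (1:ℝ), ((x : ℝ) + hdelta g δ x) / g x) ≤ s * (1 + δ) := by
  obtain ⟨hprimitive, htotal, hratio⟩ := stmt_15_general hs0 hδ.le fun x _ ↦ hg x
  exact ⟨hprimitive, htotal, ciSup_le fun x ↦ hratio x x.2⟩
end
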